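/- Let X be a finite m-almost quasigroup quandle such that for each a ∈ X the stabilizer S_a is a trivial subquandle of X. For 2 ≤ j ≤ n define F_n^j : C_n^R(X) → C_{n+1}^R(X) on generators x = (x_1,…,x_n) by F_n^j(x) = Σ_{k=1}^m Σ_{y∈X} [ (x_j,…,x_j, y, x_j^{(k)}, x_{j+1},…,x_n) − (x_j^{(k)},…,x_j^{(k)}, y, x_j^{(k)}, x_{j+1},…,x_n) ], where in each tuple the first j−1 entries are equal (to x_j and x_j^{(k)} respectively). Then ∂_{n+1}∘F_n^j + F_{n−1}^j∘∂_n = (−1)^j(|X|−m)(g_0^j − g_2^j) as maps C_n^R(X) → C_n^R(X). -/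

import Mathlib

/-- The `n`-th rack chain group: the free abelian group on `n`-tuples of `X`. -/
abbrev RackChain (X : Type) (n : ℕ) : Type := FreeAbelianGroup (Fin n → X)

/-- The face map `d_i^{(*_0)}` deleting the `i`-th entry (0-indexed). -/
def dZero {X : Type} (n : ℕ) (i : Fin (n + 1)) (x : Fin (n + 1) → X) :
    Fin n → X :=
  fun j => if (j : ℕ) < (i : ℕ) then x j.castSucc else x j.succ

/-- The face map `d_i^{(*)}`: entries before position `i` are acted on by `x i`
and the `i`-th entry is deleted (0-indexed). -/
def dStar {X : Type} (op : X → X → X) (n : ℕ) (i : Fin (n + 1))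
    (x : Fin (n + 1) → X) : Fin n → X :=
  fun j => if (j : ℕ) < (i : ℕ) then op (x j.castSucc) (x i) else x j.succ

/-- The rack boundary `∂_{n+1} : C_{n+1}^R(X) → C_n^R(X)`,
`∂(x) = Σ_{i=1}^{n+1} (-1)^i (d_i^{(*_0)} x - d_i^{(*)} x)` (with `i` 1-based). -/
def rackBoundary {X : Type} (op : X → X → X) (n : ℕ) :
    RackChain X (n + 1) →+ RackChain X n :=
  FreeAbelianGroup.lift fun x =>
    ∑ i : Fin (n + 1), ((-1 : ℤ) ^ ((i : ℕ) + 1)) •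
      (FreeAbelianGroup.of (dZero n i x) - FreeAbelianGroup.of (dStar op n i x))

/-- The group of rack `(n+1)`-cycles. -/
def rackCycles {X : Type} (op : X → X → X) (n : ℕ) :
    AddSubgroup (RackChain X (n + 1)) :=
  (rackBoundary op n).ker

/-- The group of rack `(n+1)`-boundaries, viewed inside the cycles. -/
def rackBoundaries {X : Type} (op : X → X → X) (n : ℕ) :
    AddSubgroup (rackCycles op n) :=
  ((rackBoundary op (n + 1)).range).addSubgroupOf (rackCycles op n)

/-- The `(n+1)`-st rack homology group `H_{n+1}^R(X)` (so `n = 0` gives `H_1`). -/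
def rackHomology {X : Type} (op : X → X → X) (n : ℕ) : Type :=
  rackCycles (X := X) op n ⧸ rackBoundaries op n

instance {X : Type} (op : X → X → X) (n : ℕ) :
    AddCommGroup (rackHomology op n) :=
  QuotientAddGroup.Quotient.addCommGroup _
/-- The stabilizer `S_a = {x | a * x = a}` as a finset. -/
def stabF {X : Type} [Fintype X] [DecidableEq X] (op : X → X → X) (a : X) :
    Finset X :=
  Finset.univ.filter fun y => op a y = a

/-- The chain map `g_1^j` (`j` is 1-based, `1 ≤ j ≤ n`; zero otherwise):
`g_1^j(x) = Σ_{k ∈ S_{x_j}} (k, …, k, x_j, x_{j+1}, …, x_n)`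
(the first `j-1` entries equal `k`). -/
def g1map {X : Type} [Fintype X] [DecidableEq X] (op : X → X → X) (n j : ℕ) :
    RackChain X n →+ RackChain X n :=
  FreeAbelianGroup.lift fun x =>
    if h : 1 ≤ j ∧ j ≤ n then
      ∑ k ∈ stabF op (x ⟨j - 1, by omega⟩),
        FreeAbelianGroup.of (fun i : Fin n => if (i : ℕ) < j - 1 then k else x i)
    else 0

/-- The chain map `g_2^j` (`j` is 1-based, `1 ≤ j ≤ n`; zero otherwise):
`g_2^j(x) = Σ_{k ∈ S_{x_j}} (k, …, k, x_{j+1}, …, x_n)`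
(the first `j` entries equal `k`). -/
def g2map {X : Type} [Fintype X] [DecidableEq X] (op : X → X → X) (n j : ℕ) :
    RackChain X n →+ RackChain X n :=
  FreeAbelianGroup.lift fun x =>
    if h : 1 ≤ j ∧ j ≤ n then
      ∑ k ∈ stabF op (x ⟨j - 1, by omega⟩),
        FreeAbelianGroup.of (fun i : Fin n => if (i : ℕ) < j then k else x i)
    else 0

/-- The chain map `g_0^j` (`j` is 1-based, `1 ≤ j ≤ n`; zero otherwise):
`g_0^j(x) = Σ_{k ∈ S_{x_j}} (x_j, …, x_j, k, x_{j+1}, …, x_n)`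
(the first `j-1` entries equal `x_j`, the `j`-th entry is `k`). -/
def g0map {X : Type} [Fintype X] [DecidableEq X] (op : X → X → X) (n j : ℕ) :
    RackChain X n →+ RackChain X n :=
  FreeAbelianGroup.lift fun x =>
    if h : 1 ≤ j ∧ j ≤ n then
      ∑ k ∈ stabF op (x ⟨j - 1, by omega⟩),
        FreeAbelianGroup.of (fun i : Fin n =>
          if (i : ℕ) < j - 1 then x ⟨j - 1, by omega⟩
          else if (i : ℕ) = j - 1 then k else x i)
    else 0

/-- The symmetrizer chain map `g_s^j` (`j` is 1-based):
`g_s^j(x) = Σ_{y ∈ X} (y, …, y, x_{j+1}, …, x_n)` (the first `j` entries equal `y`). -/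
def gsmap {X : Type} [Fintype X] [DecidableEq X] (op : X → X → X) (n j : ℕ) :
    RackChain X n →+ RackChain X n :=
  FreeAbelianGroup.lift fun x =>
    ∑ y : X, FreeAbelianGroup.of (fun i : Fin n => if (i : ℕ) < j then y else x i)

/-- The chain homotopy `F_n^j` (`j` 1-based, `2 ≤ j ≤ n`; zero otherwise):
`F_n^j(x) = Σ_{k ∈ S_{x_j}} Σ_{y ∈ X} [(x_j, …, x_j, y, k, x_{j+1}, …, x_n)
− (k, …, k, y, k, x_{j+1}, …, x_n)]` (first `j-1` entries equal). -/
def Fmap {X : Type} [Fintype X] [DecidableEq X] (op : X → X → X) (n j : ℕ) :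
    RackChain X n →+ RackChain X (n + 1) :=
  FreeAbelianGroup.lift fun x =>
    if h : 2 ≤ j ∧ j ≤ n then
      ∑ k ∈ stabF op (x ⟨j - 1, by omega⟩), ∑ y : X,
        (FreeAbelianGroup.of (fun i : Fin (n + 1) =>
            if (i : ℕ) < j - 1 then x ⟨j - 1, by omega⟩
            else if (i : ℕ) = j - 1 then y
            else if (i : ℕ) = j then k
            else x ⟨(i : ℕ) - 1, by have := i.isLt; omega⟩)
         - FreeAbelianGroup.of (fun i : Fin (n + 1) =>
            if (i : ℕ) < j - 1 then k
            else if (i : ℕ) = j - 1 then y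
            else if (i : ℕ) = j then k
            else x ⟨(i : ℕ) - 1, by have := i.isLt; omega⟩))
    else 0

/-- The tuple `(u, …, u, y, k, x_{p+2}, …)` with `p` leading entries `u`. -/
def tupF {X : Type} {n p : ℕ} (h : p < n) (x : Fin n → X) (u y k : X) : Fin (n + 1) → X :=
  fun i => if (i : ℕ) < p then u
    else if (i : ℕ) = p then y
    else if (i : ℕ) = p + 1 then k
    else x ⟨(i : ℕ) - 1, by have := i.isLt; omega⟩

/-- The tuple `(u, …, u, k, x_{p+2}, …)` with `p` leading entries `u`. -/
def tupG {X : Type} {n : ℕ} (p : ℕ) (x : Fin n → X) (u k : X) : Fin n → X :=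
  fun i => if (i : ℕ) < p then u else if (i : ℕ) = p then k else x i

theorem Fmap_of_pos {X : Type} [Fintype X] [DecidableEq X] (op : X → X → X) {n p : ℕ}
    (hp : 1 ≤ p) (h : p < n) (x : Fin n → X) :
    Fmap op n (p + 1) (FreeAbelianGroup.of x) =
      ∑ k ∈ stabF op (x ⟨p, h⟩), ∑ y : X,
        (FreeAbelianGroup.of (tupF h x (x ⟨p, h⟩) y k)
          - FreeAbelianGroup.of (tupF h x k y k)) := by
  have h' : 2 ≤ p + 1 ∧ p + 1 ≤ n := by omega
  simp only [Fmap, FreeAbelianGroup.lift_apply_of, dif_pos h']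
  rfl

theorem Fmap_of_neg {X : Type} [Fintype X] [DecidableEq X] (op : X → X → X) {n p : ℕ}
    (h : ¬ p < n) (x : Fin n → X) :
    Fmap op n (p + 1) (FreeAbelianGroup.of x) = 0 := by
  have h' : ¬ (2 ≤ p + 1 ∧ p + 1 ≤ n) := by omega
  simp only [Fmap, FreeAbelianGroup.lift_apply_of, dif_neg h']

theorem g0map_of {X : Type} [Fintype X] [DecidableEq X] (op : X → X → X) {n p : ℕ}
    (h : p < n) (x : Fin n → X) :
    g0map op n (p + 1) (FreeAbelianGroup.of x) =
      ∑ k ∈ stabF op (x ⟨p, h⟩), FreeAbelianGroup.of (tupG p x (x ⟨p, h⟩) k) := by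
  have h' : 1 ≤ p + 1 ∧ p + 1 ≤ n := by omega
  simp only [g0map, FreeAbelianGroup.lift_apply_of, dif_pos h']
  rfl

theorem g2map_of {X : Type} [Fintype X] [DecidableEq X] (op : X → X → X) {n p : ℕ}
    (h : p < n) (x : Fin n → X) :
    g2map op n (p + 1) (FreeAbelianGroup.of x) =
      ∑ k ∈ stabF op (x ⟨p, h⟩), FreeAbelianGroup.of (tupG p x k k) := by
  have h' : 1 ≤ p + 1 ∧ p + 1 ≤ n := by omega
  simp only [g2map, FreeAbelianGroup.lift_apply_of, dif_pos h']
  refine Finset.sum_congr rfl fun k _ => ?_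
  congr 1
  funext i
  simp only [tupG]
  split_ifs <;> first | rfl | omega

theorem face_lt {X : Type} (op : X → X → X) (hidem : ∀ a : X, op a a = a) {n p : ℕ}
    (h : p < n + 1) (x : Fin (n + 1) → X) (u y k : X) (i : Fin (n + 2)) (hi : (i : ℕ) < p) :
    dZero (n + 1) i (tupF h x u y k) = dStar op (n + 1) i (tupF h x u y k) := by
  funext l
  simp only [dZero, dStar]
  split_ifs with h1
  · have h2 : (l : ℕ) < p := by omega
    simp [tupF, hi, h2, hidem]
  · rfl

theorem face_p_zero {X : Type} {n p : ℕ}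
    (h : p < n + 1) (x : Fin (n + 1) → X) (u y k : X) (i : Fin (n + 2)) (hi : (i : ℕ) = p) :
    dZero (n + 1) i (tupF h x u y k) = tupG p x u k := by
  funext l
  simp only [dZero, tupF, tupG, hi, Fin.val_castSucc, Fin.val_succ]
  split_ifs <;> first | rfl | omega

theorem face_p_star {X : Type} (op : X → X → X) {n p : ℕ}
    (h : p < n + 1) (x : Fin (n + 1) → X) (u y k : X) (i : Fin (n + 2)) (hi : (i : ℕ) = p) :
    dStar op (n + 1) i (tupF h x u y k) = tupG p x (op u y) k := by
  funext l
  simp only [dStar, tupF, tupG, hi, Fin.val_castSucc, Fin.val_succ]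
  split_ifs <;> first | rfl | omega

theorem face_q_zero {X : Type} {n p : ℕ}
    (h : p < n + 1) (x : Fin (n + 1) → X) (u y k : X) (i : Fin (n + 2)) (hi : (i : ℕ) = p + 1) :
    dZero (n + 1) i (tupF h x u y k) = tupG p x u y := by
  funext l
  simp only [dZero, tupF, tupG, hi, Fin.val_castSucc, Fin.val_succ]
  split_ifs <;> first | rfl | omega

theorem face_q_star {X : Type} (op : X → X → X) {n p : ℕ}
    (h : p < n + 1) (x : Fin (n + 1) → X) (u y k : X) (i : Fin (n + 2)) (hi : (i : ℕ) = p + 1) :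
    dStar op (n + 1) i (tupF h x u y k) = tupG p x (op u k) (op y k) := by
  funext l
  simp only [dStar, tupF, tupG, hi, Fin.val_castSucc, Fin.val_succ]
  split_ifs <;> first | rfl | omega

theorem face_gt_zero {X : Type} {n p : ℕ}
    (h : p < n + 1) (h' : p < n) (x : Fin (n + 1) → X) (u y k : X) (i : Fin (n + 1))
    (hi : p < (i : ℕ)) :
    dZero (n + 1) i.succ (tupF h x u y k) = tupF h' (dZero n i x) u y k := by
  funext l
  simp only [dZero, tupF, Fin.val_castSucc, Fin.val_succ]
  split_ifs <;> first | rfl | omega | (congr 1; ext; simp; try omega)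

theorem face_gt_star {X : Type} (op : X → X → X) {n p : ℕ}
    (h : p < n + 1) (h' : p < n) (x : Fin (n + 1) → X) (u y k : X) (i : Fin (n + 1))
    (hi : p < (i : ℕ)) :
    dStar op (n + 1) i.succ (tupF h x u y k)
      = tupF h' (dStar op n i x) (op u (x i)) (op y (x i)) (op k (x i)) := by
  funext l
  have e : tupF h x u y k i.succ = x i := by
    simp only [tupF, Fin.val_succ]
    split_ifs <;> first | rfl | omega
  simp only [dStar, e]
  simp only [tupF, dStar, Fin.val_castSucc, Fin.val_succ]
  split_ifs <;> first | rfl | omega | (congr 1; ext; simp; try omega) | (congr 2; ext; simp; try omega)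

theorem Fmap_face_le {X : Type} [Fintype X] [DecidableEq X] (op : X → X → X) {n p : ℕ}
    (hp : 1 ≤ p) (x : Fin (n + 1) → X) (i : Fin (n + 1)) (hi : (i : ℕ) ≤ p) :
    Fmap op n (p + 1) (FreeAbelianGroup.of (dZero n i x))
      = Fmap op n (p + 1) (FreeAbelianGroup.of (dStar op n i x)) := by
  by_cases h : p < n
  · rw [Fmap_of_pos op hp h, Fmap_of_pos op hp h]
    have e : dZero n i x ⟨p, h⟩ = dStar op n i x ⟨p, h⟩ := by
      simp [dZero, dStar, not_lt.mpr hi]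
    have e2 : ∀ u y k, tupF h (dZero n i x) u y k = tupF h (dStar op n i x) u y k := by
      intro u y k
      funext l
      simp only [tupF, dZero, dStar]
      split_ifs <;> first | rfl | omega
    simp only [e, e2]
  · rw [Fmap_of_neg op h, Fmap_of_neg op h]

theorem stab_op {X : Type} [Fintype X] [DecidableEq X] (op : X → X → X)
    (hbij : ∀ b : X, Function.Bijective fun x => op x b)
    (hdist : ∀ a b c : X, op (op a b) c = op (op a c) (op b c)) (a z : X) {M : Type}
    [AddCommMonoid M] (f : X → M) :
    ∑ k ∈ stabF op (op a z), f k = ∑ k ∈ stabF op a, f (op k z) := by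
  symm
  refine Finset.sum_bij (fun k _ => op k z) ?_ ?_ ?_ ?_
  · intro k hk
    simp only [stabF, Finset.mem_filter, Finset.mem_univ, true_and] at hk ⊢
    rw [← hdist, hk]
  · intro k _ l _ e
    exact (hbij z).1 e
  · intro b hb
    obtain ⟨k, rfl⟩ := (hbij z).2 b
    refine ⟨k, ?_, rfl⟩
    simp only [stabF, Finset.mem_filter, Finset.mem_univ, true_and] at hb ⊢
    rw [← hdist] at hb
    exact (hbij z).1 hb
  · intros; rfl

theorem sum_op {X : Type} [Fintype X] [DecidableEq X] (op : X → X → X) (m : ℕ)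
    (hidem : ∀ a : X, op a a = a)
    (hstab : ∀ a : X, (stabF op a).card = m)
    (hsol : ∀ a b : X, op a b ≠ a → ∃! x : X, op a x = b) (a : X) {M : Type}
    [AddCommMonoid M] (f : X → M) :
    ∑ y : X, f (op a y) = m • f a + ∑ b ∈ (stabF op a)ᶜ, f b := by
  rw [← Finset.sum_add_sum_compl (stabF op a)]
  congr 1
  · rw [← hstab a]
    apply Finset.sum_eq_card_nsmul
    intro y hy
    simp only [stabF, Finset.mem_filter, Finset.mem_univ, true_and] at hy
    rw [hy]
  · have mem : ∀ b, b ∈ (stabF op a)ᶜ ↔ op a b ≠ a := by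
      intro b; simp [stabF]
    symm
    choose! g hg _ using hsol a
    have hmaps : ∀ b ∈ (stabF op a)ᶜ, g b ∈ (stabF op a)ᶜ := by
      intro b hb
      rw [mem] at *
      intro hc
      rw [hg b hb] at hc
      exact hb (hc ▸ hidem b)
    have hinj : Set.InjOn g ((stabF op a)ᶜ : Finset X) := by
      intro b hb c hc e
      have hb := (mem b).1 hb
      have hc := (mem c).1 hc
      rw [← hg b hb, ← hg c hc, e]
    refine Finset.sum_bij (fun b _ => g b) hmaps (fun b hb c hc e => hinj hb hc e) ?_ ?_
    · intro c hc
      obtain ⟨b, hb, e⟩ := Finset.surj_on_of_inj_on_of_card_le (fun b _ => g b) hmaps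
        (fun b c hb hc e => hinj hb hc e) le_rfl c hc
      exact ⟨b, hb, e.symm⟩
    · intro b hb
      rw [hg b ((mem b).1 hb)]

theorem stab_eq {X : Type} [Fintype X] [DecidableEq X] (op : X → X → X) (m : ℕ)
    (hstab : ∀ a : X, (stabF op a).card = m)
    (htriv : ∀ a x y : X, op a x = a → op a y = a → op x y = x) (a k : X)
    (hk : k ∈ stabF op a) : stabF op k = stabF op a := by
  symm
  apply Finset.eq_of_subset_of_card_le
  · intro y hy
    simp only [stabF, Finset.mem_filter, Finset.mem_univ, true_and] at *
    exact htriv a k y hk hy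
  · rw [hstab, hstab]

/-- For a finite `m`-almost quasigroup quandle `X` with all
stabilizers trivial subquandles,
`∂_{n+1}∘F_n^j + F_{n-1}^j∘∂_n = (−1)^j(|X|−m)(g_0^j − g_2^j)`
as maps `C_n^R(X) → C_n^R(X)` (for `2 ≤ j ≤ n`). -/
theorem mAQ_Fmap_homotopy
    {X : Type} [Fintype X] [DecidableEq X] (op : X → X → X) (m : ℕ)
    (hm : 1 ≤ m)
    (hidem : ∀ a : X, op a a = a)
    (hbij : ∀ b : X, Function.Bijective fun x => op x b)
    (hdist : ∀ a b c : X, op (op a b) c = op (op a c) (op b c))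
    (hstab : ∀ a : X, (stabF op a).card = m)
    (hsol : ∀ a b : X, op a b ≠ a → ∃! x : X, op a x = b)
    (htriv : ∀ a x y : X, op a x = a → op a y = a → op x y = x) :
    ∀ (n j : ℕ), 2 ≤ j → j ≤ n + 1 →
      ∀ c : RackChain X (n + 1),
        rackBoundary op (n + 1) (Fmap op (n + 1) j c)
            + Fmap op n j (rackBoundary op n c)
          = ((-1 : ℤ) ^ j * ((Fintype.card X : ℤ) - (m : ℤ))) •
              (g0map op (n + 1) j c - g2map op (n + 1) j c) := by
  intro n j hj hjn c
  obtain ⟨p, rfl⟩ : ∃ p, j = p + 1 := ⟨j - 1, by omega⟩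
  have hp : 1 ≤ p := by omega
  have h : p < n + 1 := by omega
  induction c using FreeAbelianGroup.induction_on with
  | zero => simp
  | neg x hx =>
    simp only [map_neg]
    rw [← neg_add, hx, ← smul_neg]
    congr 1
    abel
  | add c d hc hd =>
    simp only [map_add]
    rw [add_add_add_comm, hc, hd, ← smul_add]
    congr 1
    abel
  | of x =>
    set a := x ⟨p, h⟩ with ha
    have hka : ∀ k ∈ stabF op a, op a k = a := by
      intro k hk
      simpa [stabF] using hk
    let G : Fin (n + 2) → RackChain X (n + 1) := fun i =>
      ∑ k ∈ stabF op a, ∑ y : X, ((-1 : ℤ) ^ ((i : ℕ) + 1)) •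
        ((FreeAbelianGroup.of (dZero (n + 1) i (tupF h x a y k))
          - FreeAbelianGroup.of (dStar op (n + 1) i (tupF h x a y k)))
        - (FreeAbelianGroup.of (dZero (n + 1) i (tupF h x k y k))
          - FreeAbelianGroup.of (dStar op (n + 1) i (tupF h x k y k))))
    let H : Fin (n + 1) → RackChain X (n + 1) := fun i =>
      ((-1 : ℤ) ^ ((i : ℕ) + 1)) •
        (Fmap op n (p + 1) (FreeAbelianGroup.of (dZero n i x))
          - Fmap op n (p + 1) (FreeAbelianGroup.of (dStar op n i x)))
    have e1 : rackBoundary op (n + 1) (Fmap op (n + 1) (p + 1) (FreeAbelianGroup.of x))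
        = ∑ i, G i := by
      rw [Fmap_of_pos op hp h]
      simp only [map_sum, map_sub, rackBoundary, FreeAbelianGroup.lift_apply_of, G]
      symm
      rw [Finset.sum_comm]
      refine Finset.sum_congr rfl fun k _ => ?_
      rw [Finset.sum_comm]
      refine Finset.sum_congr rfl fun y _ => ?_
      rw [← Finset.sum_sub_distrib]
      refine Finset.sum_congr rfl fun i _ => ?_
      rw [smul_sub]
    have e2 : Fmap op n (p + 1) (rackBoundary op n (FreeAbelianGroup.of x)) = ∑ i, H i := by
      simp only [rackBoundary, FreeAbelianGroup.lift_apply_of, map_sum, map_zsmul, map_sub, H]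
    let q : Fin (n + 2) := ⟨p + 1, by omega⟩
    have hGq : G q = 0 := by
      simp only [G]
      refine Finset.sum_eq_zero fun k hk => ?_
      rw [← Finset.smul_sum]
      simp only [face_q_zero h x _ _ _ q rfl, face_q_star op h x _ _ _ q rfl, hidem, hka k hk,
        Finset.sum_sub_distrib]
      have key : ∀ u, ∑ y, FreeAbelianGroup.of (tupG p x u (op y k))
          = ∑ y, FreeAbelianGroup.of (tupG p x u y) := fun u =>
        (hbij k).sum_comp (fun y => (FreeAbelianGroup.of (tupG p x u y) : RackChain X (n + 1)))
      rw [key, key]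
      simp
    have hlt : ∀ i : Fin (n + 2), (i : ℕ) < p → G i = 0 := by
      intro i hi
      simp only [G, face_lt op hidem h x _ _ _ i hi, sub_self, smul_zero, Finset.sum_const_zero]
    have hHle : ∀ i : Fin (n + 1), (i : ℕ) ≤ p → H i = 0 := by
      intro i hi
      simp only [H, Fmap_face_le op hp x i hi, sub_self, smul_zero]
    have hgt : ∀ i : Fin (n + 1), p < (i : ℕ) → G i.succ + H i = 0 := by
      intro i hi
      have h' : p < n := by omega
      have z0 : dZero n i x ⟨p, h'⟩ = a := by
        simp [dZero, hi, ha]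
      have z1 : dStar op n i x ⟨p, h'⟩ = op a (x i) := by
        simp [dStar, hi, ha]
      simp only [G, H]
      rw [Fmap_of_pos op hp h', Fmap_of_pos op hp h', z0, z1, stab_op op hbij hdist]
      have key : ∀ k, ∑ y, (FreeAbelianGroup.of (tupF h' (dStar op n i x) (op a (x i)) y (op k (x i)))
            - FreeAbelianGroup.of (tupF h' (dStar op n i x) (op k (x i)) y (op k (x i))))
          = ∑ y, (FreeAbelianGroup.of
                (tupF h' (dStar op n i x) (op a (x i)) (op y (x i)) (op k (x i)))
            - FreeAbelianGroup.of
                (tupF h' (dStar op n i x) (op k (x i)) (op y (x i)) (op k (x i)))) := fun k =>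
        ((hbij (x i)).sum_comp (fun y =>
          (FreeAbelianGroup.of (tupF h' (dStar op n i x) (op a (x i)) y (op k (x i)))
            - FreeAbelianGroup.of (tupF h' (dStar op n i x) (op k (x i)) y (op k (x i)))))).symm
      simp only [key]
      simp only [← Finset.smul_sum, face_gt_zero h h' x _ _ _ i hi,
        face_gt_star op h h' x _ _ _ i hi, Fin.val_succ]
      rw [pow_succ _ ((i : ℕ) + 1), mul_neg_one, neg_smul, neg_add_eq_zero]
      congr 1
      simp only [← Finset.sum_sub_distrib]
      refine Finset.sum_congr rfl fun k _ => Finset.sum_congr rfl fun y _ => ?_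
      abel
    rw [e1, e2, Fin.sum_univ_succAbove G q, hGq, zero_add, ← Finset.sum_add_distrib,
      Finset.sum_eq_single (⟨p, h⟩ : Fin (n + 1))]
    · rw [hHle ⟨p, h⟩ le_rfl, add_zero, Fin.succAbove_of_castSucc_lt _ _ (by
        simp [Fin.lt_def, q])]
      have hv : ((Fin.castSucc (⟨p, h⟩ : Fin (n + 1)) : Fin (n + 2)) : ℕ) = p := rfl
      rw [g0map_of op h, g2map_of op h, ← Finset.sum_sub_distrib, Finset.smul_sum]
      simp only [G]
      refine Finset.sum_congr rfl fun k hk => ?_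
      rw [← Finset.smul_sum, hv, mul_smul]
      congr 1
      simp only [face_p_zero h x _ _ _ _ hv, face_p_star op h x _ _ _ _ hv,
        Finset.sum_sub_distrib]
      rw [sum_op op m hidem hstab hsol a (fun u => FreeAbelianGroup.of (tupG p x u k)),
        sum_op op m hidem hstab hsol k (fun u => FreeAbelianGroup.of (tupG p x u k)),
        stab_eq op m hstab htriv a k hk]
      simp only [Finset.sum_const, Finset.card_univ, sub_smul, smul_sub, natCast_zsmul]
      rw [← ha]
      abel
    · intro i _ hne
      have hne' : (i : ℕ) ≠ p := fun e => hne (Fin.ext e)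
      rcases lt_or_gt_of_ne hne' with hi | hi
      · rw [Fin.succAbove_of_castSucc_lt _ _ (by simp [Fin.lt_def, q]; omega),
          hlt _ (by simpa using hi), hHle i hi.le, add_zero]
      · rw [Fin.succAbove_of_le_castSucc _ _ (by simp [Fin.le_def, q]; omega), hgt i hi]
    · intro hn
      exact absurd (Finset.mem_univ (⟨p, h⟩ : Fin (n + 1))) hn
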